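/- (Chain yields a strict non-star inequality) Let X_1, X_2, X_3, X_4 be ±1-valued random variables on a standard Borel probability space with Var(X_l) > 0 for all l, forming a Markov chain in this order: for all 1 ≤ i < j < k ≤ 4, X_i and X_k are conditionally independent given the σ-algebra generated by X_j. Let X_l^e = ε_l X_l be noisy versions, where ε_1, …, ε_4 are ±1-valued with P(ε_l = −1) = q_l ∈ [0, 1/2) and ε_1, …, ε_4, (X_1, …, X_4) are mutually independent, and write Σ'_{i,j} = Cov(X_i^e, X_j^e). Then Σ'_{1,3}·Σ'_{2,4}·Var(X_2)·Var(X_3) = Σ'_{1,2}·Σ'_{3,4}·Cov(X_2, X_3)². In particular, if Σ'_{1,2}·Σ'_{3,4} ≠ 0 and |ρ(X_2, X_3)| ≤ ρ_max < 1, then (Σ'_{1,3}Σ'_{2,4})/(Σ'_{1,2}Σ'_{3,4}) = ρ(X_2, X_3)² ≤ ρ_max² < 1. -/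

import Mathlib

open MeasureTheory ProbabilityTheory

/-- Covariance `Cov(X,Y) = E[XY] - E[X]E[Y]`. -/
noncomputable def cov {Ω : Type*} [MeasurableSpace Ω] (μ : Measure Ω) (X Y : Ω → ℝ) : ℝ :=
  (∫ ω, X ω * Y ω ∂μ) - (∫ ω, X ω ∂μ) * (∫ ω, Y ω ∂μ)

/-- Variance `Var(X) = Cov(X,X)`. -/
noncomputable def var {Ω : Type*} [MeasurableSpace Ω] (μ : Measure Ω) (X : Ω → ℝ) : ℝ :=
  cov μ X X

/-- Correlation `ρ(X,Y) = Cov(X,Y)/√(Var(X)⬝Var(Y))`. -/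
noncomputable def corr {Ω : Type*} [MeasurableSpace Ω] (μ : Measure Ω) (X Y : Ω → ℝ) : ℝ :=
  cov μ X Y / Real.sqrt (var μ X * var μ Y)

/-!
If `X ⊥ Z | Y` and the regression of `X` on `Y` is affine, `E[X | Y] = a + b Y`, then conditioning
on `Y` gives `Cov(X, Z) = b Cov(Y, Z)` and `Cov(X, Y) = b Var(Y)`, hence
`Cov(X, Z) Var(Y) = Cov(X, Y) Cov(Y, Z)`. Regression on a two-valued variable is always affine, so
this applies to the links `(X₁, X₂, X₃)` and `(X₂, X₃, X₄)` of a binary chain. Independent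
multiplicative noise turns `Cov(Xᵢ, Xⱼ)` into `E[εᵢ] E[εⱼ] Cov(Xᵢ, Xⱼ)`, so both sides of the
identity acquire the same factor `E[ε₁] E[ε₂] E[ε₃] E[ε₄]`.
-/

section Cov

variable {Ω : Type*} [MeasurableSpace Ω] {μ : Measure Ω} {X X' Y Z : Ω → ℝ}

lemma cov_congr_left (h : X =ᵐ[μ] X') : cov μ X Z = cov μ X' Z := by
  have hmul : (fun ω => X ω * Z ω) =ᵐ[μ] fun ω => X' ω * Z ω := h.mul .rfl
  rw [cov, cov, integral_congr_ae hmul, integral_congr_ae h]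

lemma cov_eq_covariance [IsProbabilityMeasure μ] (hX : MemLp X 2 μ) (hY : MemLp Y 2 μ) :
    cov μ X Y = covariance X Y μ :=
  (covariance_eq_sub hX hY).symm

lemma cov_const_add_const_mul_left [IsProbabilityMeasure μ] (hY : MemLp Y 2 μ) (hZ : MemLp Z 2 μ)
    (a b : ℝ) : cov μ (fun ω => a + b * Y ω) Z = b * cov μ Y Z := by
  have hbY : MemLp (fun ω => b * Y ω) 2 μ := hY.const_mul b
  have habY : MemLp (fun ω => a + b * Y ω) 2 μ := (memLp_const a).add hbY
  rw [cov_eq_covariance habY hZ, cov_eq_covariance hY hZ,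
    covariance_const_add_left (hbY.integrable one_le_two), covariance_const_mul_left]

lemma corr_sq (h : 0 ≤ var μ X * var μ Y) :
    corr μ X Y ^ 2 = cov μ X Y ^ 2 / (var μ X * var μ Y) := by
  rw [corr, div_pow, Real.sq_sqrt h]

lemma cov_mul_mul_of_indepFun {e f : Ω → ℝ} (he : AEStronglyMeasurable e μ)
    (hf : AEStronglyMeasurable f μ) (hX : AEStronglyMeasurable X μ)
    (hZ : AEStronglyMeasurable Z μ) (hef : IndepFun e f μ)
    (hnoise : IndepFun (fun ω => (e ω, f ω)) (fun ω => (X ω, Z ω)) μ) :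
    cov μ (fun ω => e ω * X ω) (fun ω => f ω * Z ω)
      = (∫ ω, e ω ∂μ) * (∫ ω, f ω ∂μ) * cov μ X Z := by
  have heX : IndepFun e X μ := hnoise.comp measurable_fst measurable_fst
  have hfZ : IndepFun f Z μ := hnoise.comp measurable_snd measurable_snd
  have hmul : IndepFun (fun ω => e ω * f ω) (fun ω => X ω * Z ω) μ :=
    hnoise.comp (measurable_fst.mul measurable_snd) (measurable_fst.mul measurable_snd)
  simp only [cov, mul_mul_mul_comm (e _) (X _),
    hmul.integral_fun_mul_eq_mul_integral (he.mul hf) (hX.mul hZ),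
    hef.integral_fun_mul_eq_mul_integral he hf,
    heX.integral_fun_mul_eq_mul_integral he hX, hfZ.integral_fun_mul_eq_mul_integral hf hZ]
  ring

end Cov

section CondIndep

variable {Ω : Type*} {m mΩ : MeasurableSpace Ω} [StandardBorelSpace Ω] {μ : Measure Ω}
  {hm : m ≤ mΩ}

lemma ae_indepFun_condExpKernel_of_condIndepFun [IsFiniteMeasure μ] {β γ : Type*}
    [MeasurableSpace β] [MeasurableSpace γ] [MeasurableSpace.CountablyGenerated (β × γ)]
    {X : Ω → β} {Z : Ω → γ} (hX : Measurable X) (hZ : Measurable Z)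
    (hci : CondIndepFun m hm X Z μ) : ∀ᵐ ω ∂μ, IndepFun X Z (condExpKernel μ m ω) := by
  have hprod := (condIndepFun_iff_map_prod_eq_prod_map_map hX hZ).1 hci
  filter_upwards [ae_of_ae_trim hm hprod] with ω hω
  rw [Kernel.map_apply _ (hX.prodMk hZ), Kernel.prod_apply, Kernel.map_apply _ hX,
    Kernel.map_apply _ hZ] at hω
  exact (indepFun_iff_map_prod_eq_prod_map_map hX.aemeasurable hZ.aemeasurable).2 hω

lemma condExp_mul_of_condIndepFun [IsFiniteMeasure μ] {X Z : Ω → ℝ} (hX : Measurable X)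
    (hZ : Measurable Z) (hXi : Integrable X μ) (hZi : Integrable Z μ)
    (hXZi : Integrable (X * Z) μ) (hci : CondIndepFun m hm X Z μ) :
    μ[X * Z | m] =ᵐ[μ] μ[X | m] * μ[Z | m] := by
  filter_upwards [condExp_ae_eq_integral_condExpKernel hm hXZi,
    condExp_ae_eq_integral_condExpKernel hm hXi, condExp_ae_eq_integral_condExpKernel hm hZi,
    ae_indepFun_condExpKernel_of_condIndepFun hX hZ hci] with ω hXZω hXω hZω hindep
  rw [hXZω, Pi.mul_apply, hXω, hZω]
  exact hindep.integral_mul_eq_mul_integral hX.aestronglyMeasurable hZ.aestronglyMeasurable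

lemma cov_condExp_left_of_condIndepFun [IsFiniteMeasure μ] {X Z : Ω → ℝ} (hX : Measurable X)
    (hZ : Measurable Z) (hX2 : MemLp X 2 μ) (hZ2 : MemLp Z 2 μ)
    (hci : CondIndepFun m hm X Z μ) : cov μ (μ[X | m]) Z = cov μ X Z := by
  have hXi : Integrable X μ := hX2.integrable one_le_two
  have hZi : Integrable Z μ := hZ2.integrable one_le_two
  have hmul : ∫ ω, (μ[X | m] * Z) ω ∂μ = ∫ ω, (X * Z) ω ∂μ :=
    calc ∫ ω, (μ[X | m] * Z) ω ∂μ
      _ = ∫ ω, (μ[μ[X | m] * Z | m]) ω ∂μ := (integral_condExp hm).symm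
      _ = ∫ ω, (μ[X | m] * μ[Z | m]) ω ∂μ :=
        integral_congr_ae (condExp_mul_of_stronglyMeasurable_left stronglyMeasurable_condExp
          ((hX2.condExp one_le_two).integrable_mul hZ2) hZi)
      _ = ∫ ω, (μ[X * Z | m]) ω ∂μ :=
        integral_congr_ae
          (condExp_mul_of_condIndepFun hX hZ hXi hZi (hX2.integrable_mul hZ2) hci).symm
      _ = ∫ ω, (X * Z) ω ∂μ := integral_condExp hm
  simp only [Pi.mul_apply] at hmul
  rw [cov, cov, hmul, integral_condExp hm]

end CondIndep

/-- The regression of `X` on `Y` is affine: `E[X | σ(Y)] = a + b Y` almost surely for some constants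
`a`, `b`. It isolates what a Markov chain of binary variables has in common with a Gaussian one:
both satisfy it along every link. -/
def HasAffineRegression {Ω : Type*} [MeasurableSpace Ω] (μ : Measure Ω) (X Y : Ω → ℝ) : Prop :=
  ∃ a b : ℝ, μ[X | MeasurableSpace.comap Y inferInstance] =ᵐ[μ] fun ω => a + b * Y ω

namespace HasAffineRegression

variable {Ω : Type*} [MeasurableSpace Ω] {μ : Measure Ω} {X Y Z : Ω → ℝ}

lemma of_ae_eq_or_eq {y₁ y₂ : ℝ} (hY : ∀ᵐ ω ∂μ, Y ω = y₁ ∨ Y ω = y₂) :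
    HasAffineRegression μ X Y := by
  obtain ⟨g, -, hg⟩ := (stronglyMeasurable_condExp (μ := μ) (f := X)
    (m := MeasurableSpace.comap Y inferInstance)).exists_eq_measurable_comp
  -- The line through `(y₁, g y₁)` and `(y₂, g y₂)`; for `y₁ = y₂` division by zero gives slope `0`.
  let slope := (g y₂ - g y₁) / (y₂ - y₁)
  refine ⟨g y₁ - slope * y₁, slope, ?_⟩
  filter_upwards [hY] with ω hω
  rw [hg, Function.comp_apply]
  rcases hω with h | h
  · rw [h]; ring
  · rcases eq_or_ne y₂ y₁ with hy | hy
    · rw [h, hy]; ring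
    · have hslope : slope * (y₂ - y₁) = g y₂ - g y₁ := div_mul_cancel₀ _ (sub_ne_zero.2 hy)
      rw [h]; linear_combination -hslope

theorem cov_mul_var_eq [StandardBorelSpace Ω] [IsProbabilityMeasure μ]
    (hreg : HasAffineRegression μ X Y) (hX : Measurable X) (hY : Measurable Y) (hZ : Measurable Z)
    (hX2 : MemLp X 2 μ) (hY2 : MemLp Y 2 μ) (hZ2 : MemLp Z 2 μ)
    (hci : CondIndepFun (MeasurableSpace.comap Y inferInstance) hY.comap_le X Z μ) :
    cov μ X Z * var μ Y = cov μ X Y * cov μ Y Z := by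
  obtain ⟨a, b, hab⟩ := hreg
  have hXZ : cov μ X Z = b * cov μ Y Z := by
    rw [← cov_condExp_left_of_condIndepFun hX hZ hX2 hZ2 hci, cov_congr_left hab,
      cov_const_add_const_mul_left hY2 hZ2]
  have hXY : cov μ X Y = b * var μ Y := by
    rw [← cov_condExp_left_of_condIndepFun hX hY hX2 hY2 (condIndepFun_self_right hX hY),
      cov_congr_left hab, cov_const_add_const_mul_left hY2 hY2, var]
  rw [hXZ, hXY]
  ring

end HasAffineRegression

lemma memLp_of_ae_eq_or_eq {Ω : Type*} [MeasurableSpace Ω] {μ : Measure Ω} [IsFiniteMeasure μ]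
    {Y : Ω → ℝ} {y₁ y₂ : ℝ} (hYm : AEStronglyMeasurable Y μ)
    (hY : ∀ᵐ ω ∂μ, Y ω = y₁ ∨ Y ω = y₂) (p : ENNReal) : MemLp Y p μ := by
  refine .of_bound hYm (max |y₁| |y₂|) ?_
  filter_upwards [hY] with ω hω
  rcases hω with h | h <;> simp [h]

theorem chain_nonstar_inequality_general {Ω : Type*} [MeasurableSpace Ω] [StandardBorelSpace Ω]
    {μ : Measure Ω} [IsProbabilityMeasure μ] {X1 X2 X3 X4 ε1 ε2 ε3 ε4 : Ω → ℝ}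
    (hX1 : Measurable X1) (hX2 : Measurable X2) (hX3 : Measurable X3) (hX4 : Measurable X4)
    (hX1L2 : MemLp X1 2 μ) (hX2L2 : MemLp X2 2 μ) (hX3L2 : MemLp X3 2 μ) (hX4L2 : MemLp X4 2 μ)
    (hε1 : Integrable ε1 μ) (hε2 : Integrable ε2 μ) (hε3 : Integrable ε3 μ) (hε4 : Integrable ε4 μ)
    (hreg12 : HasAffineRegression μ X1 X2) (hreg23 : HasAffineRegression μ X2 X3)
    (hvar2 : 0 < var μ X2) (hvar3 : 0 < var μ X3)
    (hci123 : CondIndepFun (MeasurableSpace.comap X2 inferInstance) hX2.comap_le X1 X3 μ)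
    (hci234 : CondIndepFun (MeasurableSpace.comap X3 inferInstance) hX3.comap_le X2 X4 μ)
    (hindep1 : IndepFun ε1 ε2 μ)
    (hindep2 : IndepFun (fun ω => (ε1 ω, ε2 ω)) ε3 μ)
    (hindep3 : IndepFun (fun ω => (ε1 ω, ε2 ω, ε3 ω)) ε4 μ)
    (hindep4 : IndepFun (fun ω => (ε1 ω, ε2 ω, ε3 ω, ε4 ω))
      (fun ω => (X1 ω, X2 ω, X3 ω, X4 ω)) μ) :
    cov μ (fun ω => ε1 ω * X1 ω) (fun ω => ε3 ω * X3 ω)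
        * cov μ (fun ω => ε2 ω * X2 ω) (fun ω => ε4 ω * X4 ω)
        * var μ X2 * var μ X3
      = cov μ (fun ω => ε1 ω * X1 ω) (fun ω => ε2 ω * X2 ω)
        * cov μ (fun ω => ε3 ω * X3 ω) (fun ω => ε4 ω * X4 ω)
        * cov μ X2 X3 ^ 2 ∧
    ∀ ρmax : ℝ,
      cov μ (fun ω => ε1 ω * X1 ω) (fun ω => ε2 ω * X2 ω)
          * cov μ (fun ω => ε3 ω * X3 ω) (fun ω => ε4 ω * X4 ω) ≠ 0 →
      |corr μ X2 X3| ≤ ρmax → ρmax < 1 →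
      cov μ (fun ω => ε1 ω * X1 ω) (fun ω => ε3 ω * X3 ω)
          * cov μ (fun ω => ε2 ω * X2 ω) (fun ω => ε4 ω * X4 ω)
          / (cov μ (fun ω => ε1 ω * X1 ω) (fun ω => ε2 ω * X2 ω)
            * cov μ (fun ω => ε3 ω * X3 ω) (fun ω => ε4 ω * X4 ω))
        = corr μ X2 X3 ^ 2
      ∧ corr μ X2 X3 ^ 2 ≤ ρmax ^ 2 ∧ ρmax ^ 2 < 1 := by
  have hpair {φ : ℝ × ℝ × ℝ × ℝ → ℝ × ℝ} (hφ : Measurable φ) := hindep4.comp hφ hφ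
  have hcov12 := cov_mul_mul_of_indepFun hε1.1 hε2.1 hX1L2.1 hX2L2.1 hindep1
    (hpair (φ := fun p => (p.1, p.2.1)) (by fun_prop))
  have hcov13 := cov_mul_mul_of_indepFun hε1.1 hε3.1 hX1L2.1 hX3L2.1
    (hindep2.comp measurable_fst measurable_id)
    (hpair (φ := fun p => (p.1, p.2.2.1)) (by fun_prop))
  have hcov24 := cov_mul_mul_of_indepFun hε2.1 hε4.1 hX2L2.1 hX4L2.1
    (hindep3.comp (measurable_fst.comp measurable_snd) measurable_id)
    (hpair (φ := fun p => (p.2.1, p.2.2.2)) (by fun_prop))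
  have hcov34 := cov_mul_mul_of_indepFun hε3.1 hε4.1 hX3L2.1 hX4L2.1
    (hindep3.comp (measurable_snd.comp measurable_snd) measurable_id)
    (hpair (φ := fun p => (p.2.2.1, p.2.2.2)) (by fun_prop))
  have hlink123 := hreg12.cov_mul_var_eq hX1 hX2 hX3 hX1L2 hX2L2 hX3L2 hci123
  have hlink234 := hreg23.cov_mul_var_eq hX2 hX3 hX4 hX2L2 hX3L2 hX4L2 hci234
  have hchain : cov μ X1 X3 * cov μ X2 X4 * var μ X2 * var μ X3
      = cov μ X1 X2 * cov μ X3 X4 * cov μ X2 X3 ^ 2 := by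
    linear_combination cov μ X2 X4 * var μ X3 * hlink123 + cov μ X1 X2 * cov μ X2 X3 * hlink234
  have hidentity :
      cov μ (fun ω => ε1 ω * X1 ω) (fun ω => ε3 ω * X3 ω)
          * cov μ (fun ω => ε2 ω * X2 ω) (fun ω => ε4 ω * X4 ω)
          * var μ X2 * var μ X3
        = cov μ (fun ω => ε1 ω * X1 ω) (fun ω => ε2 ω * X2 ω)
          * cov μ (fun ω => ε3 ω * X3 ω) (fun ω => ε4 ω * X4 ω)
          * cov μ X2 X3 ^ 2 := by
    rw [hcov12, hcov13, hcov24, hcov34]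
    linear_combination
      (∫ ω, ε1 ω ∂μ) * (∫ ω, ε2 ω ∂μ) * (∫ ω, ε3 ω ∂μ) * (∫ ω, ε4 ω ∂μ) * hchain
  refine ⟨hidentity, fun ρmax hne hρ hρ1 => ⟨?_, ?_, ?_⟩⟩
  · have hvar : 0 < var μ X2 * var μ X3 := mul_pos hvar2 hvar3
    rw [corr_sq hvar.le, div_eq_div_iff hne hvar.ne']
    linear_combination hidentity
  · exact sq_le_sq.2 (hρ.trans (le_abs_self ρmax))
  · exact pow_lt_one₀ ((abs_nonneg _).trans hρ) hρ1 two_ne_zero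

/-- Chain yields a strict non-star inequality: under the Markov-chain and
independent-flip hypotheses, the noisy covariances satisfy
`Σ'_{1,3} Σ'_{2,4} Var(X_2) Var(X_3) = Σ'_{1,2} Σ'_{3,4} Cov(X_2,X_3)²`; in particular, if
`Σ'_{1,2} Σ'_{3,4} ≠ 0` and `|ρ(X_2,X_3)| ≤ ρ_max < 1`, then
`(Σ'_{1,3}Σ'_{2,4})/(Σ'_{1,2}Σ'_{3,4}) = ρ(X_2,X_3)² ≤ ρ_max² < 1`. -/
theorem chain_nonstar_inequality {Ω : Type*} [MeasurableSpace Ω] [StandardBorelSpace Ω]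
    (μ : Measure Ω) [IsProbabilityMeasure μ]
    (X1 X2 X3 X4 ε1 ε2 ε3 ε4 : Ω → ℝ) (q1 q2 q3 q4 : ℝ)
    (hX1 : Measurable X1) (hX2 : Measurable X2) (hX3 : Measurable X3) (hX4 : Measurable X4)
    (hε1 : Measurable ε1) (hε2 : Measurable ε2) (hε3 : Measurable ε3) (hε4 : Measurable ε4)
    (hX1pm : ∀ᵐ ω ∂μ, X1 ω = 1 ∨ X1 ω = -1)
    (hX2pm : ∀ᵐ ω ∂μ, X2 ω = 1 ∨ X2 ω = -1)
    (hX3pm : ∀ᵐ ω ∂μ, X3 ω = 1 ∨ X3 ω = -1)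
    (hX4pm : ∀ᵐ ω ∂μ, X4 ω = 1 ∨ X4 ω = -1)
    (hε1pm : ∀ᵐ ω ∂μ, ε1 ω = 1 ∨ ε1 ω = -1)
    (hε2pm : ∀ᵐ ω ∂μ, ε2 ω = 1 ∨ ε2 ω = -1)
    (hε3pm : ∀ᵐ ω ∂μ, ε3 ω = 1 ∨ ε3 ω = -1)
    (hε4pm : ∀ᵐ ω ∂μ, ε4 ω = 1 ∨ ε4 ω = -1)
    (hvar1 : 0 < var μ X1) (hvar2 : 0 < var μ X2)
    (hvar3 : 0 < var μ X3) (hvar4 : 0 < var μ X4)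
    -- Markov chain: `X_i ⊥ X_k | σ(X_j)` for all `1 ≤ i < j < k ≤ 4`:
    (hci123 : CondIndepFun (MeasurableSpace.comap X2 inferInstance) hX2.comap_le X1 X3 μ)
    (hci124 : CondIndepFun (MeasurableSpace.comap X2 inferInstance) hX2.comap_le X1 X4 μ)
    (hci134 : CondIndepFun (MeasurableSpace.comap X3 inferInstance) hX3.comap_le X1 X4 μ)
    (hci234 : CondIndepFun (MeasurableSpace.comap X3 inferInstance) hX3.comap_le X2 X4 μ)
    -- flip probabilities:
    (hq1 : (μ {ω | ε1 ω = -1}).toReal = q1) (hq1' : 0 ≤ q1) (hq1'' : q1 < 1 / 2)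
    (hq2 : (μ {ω | ε2 ω = -1}).toReal = q2) (hq2' : 0 ≤ q2) (hq2'' : q2 < 1 / 2)
    (hq3 : (μ {ω | ε3 ω = -1}).toReal = q3) (hq3' : 0 ≤ q3) (hq3'' : q3 < 1 / 2)
    (hq4 : (μ {ω | ε4 ω = -1}).toReal = q4) (hq4' : 0 ≤ q4) (hq4'' : q4 < 1 / 2)
    -- mutual independence of `ε_1, ε_2, ε_3, ε_4, (X_1, X_2, X_3, X_4)`:
    (hindep1 : IndepFun ε1 ε2 μ)
    (hindep2 : IndepFun (fun ω => (ε1 ω, ε2 ω)) ε3 μ)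
    (hindep3 : IndepFun (fun ω => (ε1 ω, ε2 ω, ε3 ω)) ε4 μ)
    (hindep4 : IndepFun (fun ω => (ε1 ω, ε2 ω, ε3 ω, ε4 ω))
      (fun ω => (X1 ω, X2 ω, X3 ω, X4 ω)) μ) :
    cov μ (fun ω => ε1 ω * X1 ω) (fun ω => ε3 ω * X3 ω)
        * cov μ (fun ω => ε2 ω * X2 ω) (fun ω => ε4 ω * X4 ω)
        * var μ X2 * var μ X3
      = cov μ (fun ω => ε1 ω * X1 ω) (fun ω => ε2 ω * X2 ω)
        * cov μ (fun ω => ε3 ω * X3 ω) (fun ω => ε4 ω * X4 ω)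
        * cov μ X2 X3 ^ 2 ∧
    ∀ ρmax : ℝ,
      cov μ (fun ω => ε1 ω * X1 ω) (fun ω => ε2 ω * X2 ω)
          * cov μ (fun ω => ε3 ω * X3 ω) (fun ω => ε4 ω * X4 ω) ≠ 0 →
      |corr μ X2 X3| ≤ ρmax → ρmax < 1 →
      cov μ (fun ω => ε1 ω * X1 ω) (fun ω => ε3 ω * X3 ω)
          * cov μ (fun ω => ε2 ω * X2 ω) (fun ω => ε4 ω * X4 ω)
          / (cov μ (fun ω => ε1 ω * X1 ω) (fun ω => ε2 ω * X2 ω)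
            * cov μ (fun ω => ε3 ω * X3 ω) (fun ω => ε4 ω * X4 ω))
        = corr μ X2 X3 ^ 2
      ∧ corr μ X2 X3 ^ 2 ≤ ρmax ^ 2 ∧ ρmax ^ 2 < 1 := by
  exact chain_nonstar_inequality_general hX1 hX2 hX3 hX4
    (memLp_of_ae_eq_or_eq hX1.aestronglyMeasurable hX1pm 2)
    (memLp_of_ae_eq_or_eq hX2.aestronglyMeasurable hX2pm 2)
    (memLp_of_ae_eq_or_eq hX3.aestronglyMeasurable hX3pm 2)
    (memLp_of_ae_eq_or_eq hX4.aestronglyMeasurable hX4pm 2)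
    ((memLp_of_ae_eq_or_eq hε1.aestronglyMeasurable hε1pm 1).integrable le_rfl)
    ((memLp_of_ae_eq_or_eq hε2.aestronglyMeasurable hε2pm 1).integrable le_rfl)
    ((memLp_of_ae_eq_or_eq hε3.aestronglyMeasurable hε3pm 1).integrable le_rfl)
    ((memLp_of_ae_eq_or_eq hε4.aestronglyMeasurable hε4pm 1).integrable le_rfl)
    (.of_ae_eq_or_eq hX2pm) (.of_ae_eq_or_eq hX3pm) hvar2 hvar3 hci123 hci234
    hindep1 hindep2 hindep3 hindep4
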